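/- arXiv:1802.07075 — 3 statements merged into one kernel-verified Lean document; each statement's English description precedes it below -/
import Mathlib

section
/- Let F and G be polynomials in ℚ[t_{α,0}, t_{α,1} : 0 ≤ α ≤ r−1] satisfying the topological recursion relation: for all 0 ≤ α, β ≤ r−1, ∂_{α,1}∂_{β,0}G = Σ_{μ=0}^{r−2} (∂_{α,0}∂_{μ,0}F)·(∂_{r−2−μ,0}∂_{β,0}G) + (∂_{α,0}G)·(∂_{r−1,0}∂_{β,0}G). Then F and G satisfy the WDVV-type equations: for all 0 ≤ α, β, γ ≤ r−1, Σ_{μ=0}^{r−2} (∂_{α,0}∂_{β,0}∂_{μ,0}F)·(∂_{r−2−μ,0}∂_{γ,0}G) + (∂_{α,0}∂_{β,0}G)·(∂_{r−1,0}∂_{γ,0}G) = Σ_{μ=0}^{r−2} (∂_{α,0}∂_{γ,0}∂_{μ,0}F)·(∂_{r−2−μ,0}∂_{β,0}G) + (∂_{α,0}∂_{γ,0}G)·(∂_{r−1,0}∂_{β,0}G). -/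
open scoped BigOperators
open MvPolynomial

/-!
The topological recursion relation says that `∂_{α,1}` and the vector field
`X_α = ∑_{μ+ν=r−2} (∂_{α,0}∂_{μ,0}F) ∂_{ν,0} + (∂_{α,0}G) ∂_{r−1,0}` agree on every `∂_{β,0}G`.
Since `∂_{γ,0}` commutes with `∂_{α,1}`, applying it gives
`[∂_{γ,0}, X_α] ∂_{β,0}G = ∂_{α,1}∂_{β,0}∂_{γ,0}G − X_α ∂_{β,0}∂_{γ,0}G`, which is symmetric
in `β` and `γ`. The bracket `[∂_{γ,0}, X_α]` is obtained from `X_α` by differentiating its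
coefficients, so this symmetry is the WDVV-type equation.
-/

theorem lie_pderiv_pderiv {R σ : Type*} [CommRing R] (i j : σ) :
    ⁅(pderiv i : Derivation R (MvPolynomial σ R) (MvPolynomial σ R)), pderiv (R := R) j⁆ = 0 := by
  classical
  refine derivation_ext fun k => ?_
  simp [Derivation.commutator_apply, pderiv_X, Pi.single_apply, apply_ite]

section LieRingModule

variable {L M : Type*} [LieRing L] [AddCommGroup M] [LieRingModule L M] {b c e x : L}

theorem lie_lie_comm_of_lie_eq_zero (hbc : ⁅b, c⁆ = 0) (m : M) : ⁅b, ⁅c, m⁆⁆ = ⁅c, ⁅b, m⁆⁆ := by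
  rw [leibniz_lie, hbc, zero_lie, zero_add]

theorem lie_lie_lie_comm_of_lie_lie_eq {m : M} (hbc : ⁅b, c⁆ = 0) (heb : ⁅e, b⁆ = 0)
    (hec : ⁅e, c⁆ = 0) (hb : ⁅e, ⁅b, m⁆⁆ = ⁅x, ⁅b, m⁆⁆) (hc : ⁅e, ⁅c, m⁆⁆ = ⁅x, ⁅c, m⁆⁆) :
    ⁅⁅c, x⁆, ⁅b, m⁆⁆ = ⁅⁅b, x⁆, ⁅c, m⁆⁆ :=
  calc ⁅⁅c, x⁆, ⁅b, m⁆⁆ = ⁅e, ⁅c, ⁅b, m⁆⁆⁆ - ⁅x, ⁅c, ⁅b, m⁆⁆⁆ := by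
        rw [lie_lie, ← hb, lie_lie_comm_of_lie_eq_zero hec]
    _ = ⁅e, ⁅b, ⁅c, m⁆⁆⁆ - ⁅x, ⁅b, ⁅c, m⁆⁆⁆ := by rw [lie_lie_comm_of_lie_eq_zero hbc]
    _ = ⁅⁅b, x⁆, ⁅c, m⁆⁆ := by rw [lie_lie, ← hc, lie_lie_comm_of_lie_eq_zero heb]

end LieRingModule

section TopologicalRecursion

variable {R A ι : Type*} [CommRing R] [CommRing A] [Algebra R A] [Fintype ι]
  (η : ι → ι → R) (o : ι) (D : ι → Derivation R A A) (F G : A) (α : ι)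

/-- The vector field `X_α` whose action on `D β G` is the right-hand side of the topological
recursion relation for `F` and `G`. The weights `η` encode the pairing of the indices (in the
`r`-spin case, the indicator of `μ + ν = r - 2`), and `o` is the index of the extended direction
(in the `r`-spin case, `r - 1`). -/
def trrField : Derivation R A A :=
  ∑ μ, ∑ ν, (η μ ν • D α (D μ F)) • D ν + D α G • D o

theorem trrField_apply (g : A) :
    trrField η o D F G α g = ∑ μ, ∑ ν, η μ ν • (D α (D μ F) * D ν g) + D α G * D o g := by
  rw [← Derivation.bracket_eq_fun]
  simp only [trrField, add_lie, sum_lie, LieRinehartRing.lie_smul_eq_mul, smul_mul_assoc,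
    Derivation.bracket_eq_fun]

variable {η o D F G}

theorem lie_trrField (hD : ∀ i j, ⁅D i, D j⁆ = 0) (γ : ι) :
    ⁅D γ, trrField η o D F G α⁆ = trrField η o D (D γ F) (D γ G) α := by
  have swap (i j : ι) (g : A) : D i (D j g) = D j (D i g) :=
    lie_lie_comm_of_lie_eq_zero (hD i j) g
  simp only [trrField, lie_add, lie_sum, LieRinehartRing.leibniz_smul_right, hD, smul_zero,
    zero_add, Derivation.bracket_eq_fun, Derivation.map_smul, swap γ]

theorem wdvv_type_of_trr_general {E : ι → Derivation R A A}
    (hD : ∀ i j, ⁅D i, D j⁆ = 0) (hE : ∀ i j, ⁅E i, D j⁆ = 0)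
    (hTRR : ∀ α β, E α (D β G) =
      ∑ μ, ∑ ν, η μ ν • (D α (D μ F) * D ν (D β G)) + D α G * D o (D β G)) (α β γ : ι) :
    ∑ μ, ∑ ν, η μ ν • (D α (D β (D μ F)) * D ν (D γ G)) + D α (D β G) * D o (D γ G) =
      ∑ μ, ∑ ν, η μ ν • (D α (D γ (D μ F)) * D ν (D β G)) + D α (D γ G) * D o (D β G) := by
  have hX (β : ι) : E α (D β G) = trrField η o D F G α (D β G) := by
    rw [hTRR, trrField_apply]
  have hsymm : ⁅D β, trrField η o D F G α⁆ (D γ G) = ⁅D γ, trrField η o D F G α⁆ (D β G) :=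
    lie_lie_lie_comm_of_lie_lie_eq (hD γ β) (hE α γ) (hE α β) (hX γ) (hX β)
  have swap (i j : ι) : D i (D j F) = D j (D i F) :=
    lie_lie_comm_of_lie_eq_zero (hD i j) F
  simpa only [lie_trrField _ hD, trrField_apply, swap _ β, swap _ γ] using hsymm

end TopologicalRecursion

/-- If `F` and `G` (polynomials in the variables `t_{α,d}`, `0 ≤ α ≤ r−1`,
`d ∈ {0,1}`) satisfy the topological recursion relation
`∂_{α,1}∂_{β,0}G = ∑_{μ+ν=r−2} (∂_{α,0}∂_{μ,0}F)·(∂_{ν,0}∂_{β,0}G)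
  + (∂_{α,0}G)·(∂_{r−1,0}∂_{β,0}G)`,
then they satisfy the WDVV-type equations. -/
theorem wdvv_type_of_trr
    (r : ℕ) (hr : 2 ≤ r)
    (F G : MvPolynomial (Fin r × Fin 2) ℚ)
    (hTRR : ∀ α β : Fin r,
      pderiv (α, (1 : Fin 2)) (pderiv (β, (0 : Fin 2)) G) =
        (∑ μ : Fin r, ∑ ν : Fin r,
          if (μ : ℕ) + (ν : ℕ) = r - 2 then
            pderiv (α, (0 : Fin 2)) (pderiv (μ, (0 : Fin 2)) F) *
              pderiv (ν, (0 : Fin 2)) (pderiv (β, (0 : Fin 2)) G)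
          else 0)
        + pderiv (α, (0 : Fin 2)) G *
            pderiv ((⟨r - 1, by omega⟩ : Fin r), (0 : Fin 2))
              (pderiv (β, (0 : Fin 2)) G)) :
    ∀ α β γ : Fin r,
      (∑ μ : Fin r, ∑ ν : Fin r,
        if (μ : ℕ) + (ν : ℕ) = r - 2 then
          pderiv (α, (0 : Fin 2)) (pderiv (β, (0 : Fin 2)) (pderiv (μ, (0 : Fin 2)) F)) *
            pderiv (ν, (0 : Fin 2)) (pderiv (γ, (0 : Fin 2)) G)
        else 0)
      + pderiv (α, (0 : Fin 2)) (pderiv (β, (0 : Fin 2)) G) *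
          pderiv ((⟨r - 1, by omega⟩ : Fin r), (0 : Fin 2)) (pderiv (γ, (0 : Fin 2)) G)
      =
      (∑ μ : Fin r, ∑ ν : Fin r,
        if (μ : ℕ) + (ν : ℕ) = r - 2 then
          pderiv (α, (0 : Fin 2)) (pderiv (γ, (0 : Fin 2)) (pderiv (μ, (0 : Fin 2)) F)) *
            pderiv (ν, (0 : Fin 2)) (pderiv (β, (0 : Fin 2)) G)
        else 0)
      + pderiv (α, (0 : Fin 2)) (pderiv (γ, (0 : Fin 2)) G) *
          pderiv ((⟨r - 1, by omega⟩ : Fin r), (0 : Fin 2)) (pderiv (β, (0 : Fin 2)) G) := by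
  simpa [ite_smul] using wdvv_type_of_trr_general
    (η := fun μ ν : Fin r => if (μ : ℕ) + ν = r - 2 then (1 : ℚ) else 0)
    (fun i j => lie_pderiv_pderiv (i, 0) (j, 0)) (fun i j => lie_pderiv_pderiv (i, 1) (j, 0))
    (by simpa [ite_smul] using hTRR)
end

section
/- The polynomial F_{3,3} satisfies the WDVV equations; moreover ∂³F_{3,3}/∂t_{00}∂t_a∂t_b = η_{a,b} for all a, b ∈ V, and every monomial t_{00}^a t_{10}^b t_{01}^c t_{11}^d occurring in F_{3,3} satisfies 3a + 2b + 2c + d = 7. -/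
open scoped BigOperators
open MvPolynomial

/-- The index set `V = {(0,0),(1,0),(0,1),(1,1)}` of the variables `t_{αβ}`. -/
abbrev Vidx : Type := Fin 2 × Fin 2

/-- The metric `η` of the FJRW theory of `x₁³+x₂³`:
`η_{(a₁,b₁),(a₂,b₂)} = 1` if `a₁+a₂ = 1` and `b₁+b₂ = 1`, and `0` otherwise. -/
def eta (v w : Vidx) : ℚ :=
  if v.1.val + w.1.val = 1 ∧ v.2.val + w.2.val = 1 then 1 else 0

/-- Third partial derivative of a polynomial in the variables `t_v`, `v ∈ V`. -/
noncomputable def d3 (F : MvPolynomial Vidx ℚ) (a b c : Vidx) : MvPolynomial Vidx ℚ :=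
  pderiv a (pderiv b (pderiv c F))

/-- The WDVV equations for a polynomial in the variables `t_v`, `v ∈ V`, with respect to the
metric `η` (which is its own inverse matrix). -/
def SatisfiesWDVV (F : MvPolynomial Vidx ℚ) : Prop :=
  ∀ v₁ v₂ v₃ v₄ : Vidx,
    ∑ e : Vidx, ∑ f : Vidx, MvPolynomial.C (eta e f) * d3 F v₁ v₂ e * d3 F f v₃ v₄ =
    ∑ e : Vidx, ∑ f : Vidx, MvPolynomial.C (eta e f) * d3 F v₁ v₃ e * d3 F f v₂ v₄

/-- The FJRW potential of the singularity `x₁³+x₂³`. -/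
noncomputable def F33 : MvPolynomial Vidx ℚ :=
  MvPolynomial.C (1/2 : ℚ) * X (0,0) ^ 2 * X (1,1)
  + X (0,0) * X (1,0) * X (0,1)
  + MvPolynomial.C (1/18 : ℚ) * X (1,0) ^ 3 * X (1,1)
  + MvPolynomial.C (1/18 : ℚ) * X (0,1) ^ 3 * X (1,1)
  + MvPolynomial.C (1/54 : ℚ) * X (1,0) * X (0,1) * X (1,1) ^ 3
  + MvPolynomial.C (1/68040 : ℚ) * X (1,1) ^ 7

/-!
Third derivatives of `F`, with one index raised by `η`, are the structure constants of a product `∘`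
on the span of the `∂_v`, and WDVV says that the operators `∂_v ∘` commute. For `F33`, `∂_{00}` is
the unit and `∂_{10} ∘ (∂_{01} ∘ a) = ∂_{11} ∘ a + (t_{11}² / 18) a`. Hence all the operators are
polynomials in those of `∂_{10}` and `∂_{01}`, and the latter two commute because each operator is
self-adjoint for `η`, so that taking adjoints of this identity exchanges the two factors.
-/

lemma pderiv_comm {σ R : Type*} [CommSemiring R] (i j : σ) (p : MvPolynomial σ R) :
    pderiv i (pderiv j p) = pderiv j (pderiv i p) := by
  classical
  induction p using MvPolynomial.induction_on with
  | C r => simp only [pderiv_C, map_zero]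
  | add p q hp hq => simp only [map_add, hp, hq]
  | mul_X p k hp =>
    have pderiv_pderiv_X (i j : σ) : pderiv i (pderiv j (X k : MvPolynomial σ R)) = 0 := by
      rw [pderiv_X, Pi.single_apply]
      split_ifs <;> simp only [pderiv_one, map_zero]
    simp only [pderiv_mul, map_add, hp, pderiv_pderiv_X]
    ring

lemma d3_swap_left (F : MvPolynomial Vidx ℚ) (a b c : Vidx) : d3 F a b c = d3 F b a c :=
  pderiv_comm a b _

lemma d3_swap_right (F : MvPolynomial Vidx ℚ) (a b c : Vidx) : d3 F a b c = d3 F a c b :=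
  congrArg (pderiv a) (pderiv_comm b c F)

lemma d3_rotate (F : MvPolynomial Vidx ℚ) (a b c : Vidx) : d3 F a b c = d3 F b c a := by
  rw [d3_swap_left, d3_swap_right]

/-- The enumeration `(0,0), (0,1), (1,0), (1,1)` of `V`, the order of the rows and columns of
every `4 × 4` table below. -/
def tableIndex : Fin 4 ≃ Vidx where
  toFun := ![(0, 0), (0, 1), (1, 0), (1, 1)]
  invFun v := ⟨2 * v.1 + v.2, by omega⟩
  left_inv := by decide
  right_inv := by decide

/-- A `4 × 4` table read as a matrix with rows and columns indexed by `V`. -/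
noncomputable def ofTable : Matrix (Fin 4) (Fin 4) (MvPolynomial Vidx ℚ) ≃ₐ[MvPolynomial Vidx ℚ]
    Matrix Vidx Vidx (MvPolynomial Vidx ℚ) :=
  Matrix.reindexAlgEquiv _ _ tableIndex

lemma eq_ofTable_iff {A : Matrix Vidx Vidx (MvPolynomial Vidx ℚ)}
    {T : Matrix (Fin 4) (Fin 4) (MvPolynomial Vidx ℚ)} :
    A = ofTable T ↔ ∀ i j, A (tableIndex i) (tableIndex j) = T i j := by
  rw [← ofTable.symm_apply_eq, ← Matrix.ext_iff]
  rfl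

/-- The matrix of the metric `η`, with entries viewed as constant polynomials. -/
noncomputable def etaMatrix : Matrix Vidx Vidx (MvPolynomial Vidx ℚ) :=
  Matrix.of fun a b => C (eta a b)

lemma etaMatrix_eq_ofTable :
    etaMatrix = ofTable !![0, 0, 0, 1;
                           0, 0, 1, 0;
                           0, 1, 0, 0;
                           1, 0, 0, 0] := by
  refine eq_ofTable_iff.mpr fun i j => ?_
  fin_cases i <;> fin_cases j <;> simp [etaMatrix, eta, tableIndex]

lemma etaMatrix_mul_self : etaMatrix * etaMatrix = 1 := by
  rw [etaMatrix_eq_ofTable, ← map_mul, ← map_one ofTable]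
  congr 1
  ext1 i j
  fin_cases i <;> fin_cases j <;> simp

lemma isSymm_etaMatrix : etaMatrix.IsSymm :=
  Matrix.IsSymm.ext fun a b => by simp only [etaMatrix, Matrix.of_apply, eta, add_comm]

/-- The Hessian matrix of `∂F/∂t_v`, collecting the structure constants of quantum multiplication
by `∂_v` with lowered indices. -/
noncomputable def d3Matrix (F : MvPolynomial Vidx ℚ) (v : Vidx) :
    Matrix Vidx Vidx (MvPolynomial Vidx ℚ) :=
  Matrix.of (d3 F v)

lemma isSymm_d3Matrix (F : MvPolynomial Vidx ℚ) (v : Vidx) : (d3Matrix F v).IsSymm :=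
  Matrix.IsSymm.ext fun a b => d3_swap_right F v b a

/-- Quantum multiplication by `∂_v`, where `∂_v ∘ ∂_a = ∑ (∂³F/∂t_v∂t_a∂t_e) η_{e,b} ∂_b`: row `a`
holds the coordinates of `∂_v ∘ ∂_a`. In general `∘` is commutative but not associative. -/
noncomputable def quantumMul (F : MvPolynomial Vidx ℚ) (v : Vidx) :
    Matrix Vidx Vidx (MvPolynomial Vidx ℚ) :=
  d3Matrix F v * etaMatrix

lemma quantumMul_mul_etaMatrix (F : MvPolynomial Vidx ℚ) (v : Vidx) :
    quantumMul F v * etaMatrix = d3Matrix F v := by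
  rw [quantumMul, mul_assoc, etaMatrix_mul_self, mul_one]

lemma quantumMul_eq_one {F : MvPolynomial Vidx ℚ} {v : Vidx}
    (unit : ∀ a b, d3 F v a b = C (eta a b)) : quantumMul F v = 1 := by
  rw [quantumMul, show d3Matrix F v = etaMatrix from Matrix.ext unit, etaMatrix_mul_self]

lemma quantumMul_mul_d3Matrix_apply (F : MvPolynomial Vidx ℚ) (a v w b : Vidx) :
    (quantumMul F v * d3Matrix F w) a b = ∑ e, ∑ f, C (eta e f) * d3 F a v e * d3 F f w b := by
  simp only [quantumMul, Matrix.mul_apply, Finset.sum_mul, d3Matrix, etaMatrix, Matrix.of_apply,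
    d3_swap_left F a v, d3_swap_left F _ w b]
  rw [Finset.sum_comm]
  simp only [mul_comm (C _)]

lemma commute_quantumMul_iff {F : MvPolynomial Vidx ℚ} {v w : Vidx} :
    Commute (quantumMul F v) (quantumMul F w) ↔
      quantumMul F v * d3Matrix F w = quantumMul F w * d3Matrix F v := by
  have eta_unit : IsUnit etaMatrix := .of_mul_eq_one _ etaMatrix_mul_self
  rw [← eta_unit.mul_left_inj, mul_assoc, mul_assoc]
  rfl

lemma satisfiesWDVV_iff_commute {F : MvPolynomial Vidx ℚ} :
    SatisfiesWDVV F ↔ ∀ v w, Commute (quantumMul F v) (quantumMul F w) := by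
  simp only [SatisfiesWDVV, commute_quantumMul_iff, ← Matrix.ext_iff,
    quantumMul_mul_d3Matrix_apply]
  exact ⟨fun h v w a b => h a v w b, fun h a v w b => h v w a b⟩

lemma commute_quantumMul_of_mul_eq {F p : MvPolynomial Vidx ℚ} {u v w : Vidx}
    (h : quantumMul F v * quantumMul F w = quantumMul F u + p • 1) :
    Commute (quantumMul F v) (quantumMul F w) := by
  have lowered : quantumMul F v * d3Matrix F w = d3Matrix F u + p • etaMatrix := by
    rw [← quantumMul_mul_etaMatrix F w, ← mul_assoc, h, add_mul, quantumMul_mul_etaMatrix,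
      Matrix.smul_mul, one_mul]
  rw [commute_quantumMul_iff]
  -- Transposition fixes the right-hand side of `lowered` and exchanges `v` and `w` on the left.
  calc quantumMul F v * d3Matrix F w
      = (quantumMul F v * d3Matrix F w).transpose := by
        rw [lowered, Matrix.transpose_add, Matrix.transpose_smul, (isSymm_d3Matrix F u).eq,
          isSymm_etaMatrix.eq]
    _ = quantumMul F w * d3Matrix F v := by
        rw [quantumMul, quantumMul, Matrix.transpose_mul, Matrix.transpose_mul,
          (isSymm_d3Matrix F v).eq, (isSymm_d3Matrix F w).eq, isSymm_etaMatrix.eq, mul_assoc]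

lemma satisfiesWDVV_of_quantumMul_mul_eq {F p : MvPolynomial Vidx ℚ}
    (unit : ∀ a b, d3 F (0, 0) a b = C (eta a b))
    (h : quantumMul F (1, 0) * quantumMul F (0, 1) = quantumMul F (1, 1) + p • 1) :
    SatisfiesWDVV F := by
  have h11 : quantumMul F (1, 1) = quantumMul F (1, 0) * quantumMul F (0, 1) - p • 1 :=
    eq_sub_of_add_eq h.symm
  have comm : Commute (quantumMul F (1, 0)) (quantumMul F (0, 1)) :=
    commute_quantumMul_of_mul_eq h
  have scalar (M : Matrix Vidx Vidx (MvPolynomial Vidx ℚ)) : Commute M (p • 1) :=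
    (Commute.one_right M).smul_right p
  have comm10 : Commute (quantumMul F (1, 0)) (quantumMul F (1, 1)) := by
    rw [h11]
    exact ((Commute.refl _).mul_right comm).sub_right (scalar _)
  have comm01 : Commute (quantumMul F (0, 1)) (quantumMul F (1, 1)) := by
    rw [h11]
    exact (comm.symm.mul_right (Commute.refl _)).sub_right (scalar _)
  rw [satisfiesWDVV_iff_commute]
  simp only [Prod.forall, Fin.forall_fin_two, quantumMul_eq_one unit, Commute.one_left,
    Commute.one_right, Commute.refl, comm, comm.symm, comm10, comm10.symm, comm01, comm01.symm,
    and_self]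

lemma pderiv_F33_00 : pderiv (0, 0) F33 = X (0, 0) * X (1, 1) + X (1, 0) * X (0, 1) := by
  simp +decide only [F33, map_add, pderiv_mul, pderiv_pow, pderiv_C, pderiv_X, Pi.single_apply,
    if_true, if_false]
  polynomial

lemma pderiv_F33_10 :
    pderiv (1, 0) F33 = X (0, 0) * X (0, 1) + C (1 / 6) * X (1, 0) ^ 2 * X (1, 1)
      + C (1 / 54) * X (0, 1) * X (1, 1) ^ 3 := by
  simp +decide only [F33, map_add, pderiv_mul, pderiv_pow, pderiv_C, pderiv_X, Pi.single_apply,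
    if_true, if_false]
  polynomial

lemma pderiv_F33_01 :
    pderiv (0, 1) F33 = X (0, 0) * X (1, 0) + C (1 / 6) * X (0, 1) ^ 2 * X (1, 1)
      + C (1 / 54) * X (1, 0) * X (1, 1) ^ 3 := by
  simp +decide only [F33, map_add, pderiv_mul, pderiv_pow, pderiv_C, pderiv_X, Pi.single_apply,
    if_true, if_false]
  polynomial

lemma pderiv_F33_11 :
    pderiv (1, 1) F33 = C (1 / 2) * X (0, 0) ^ 2 + C (1 / 18) * X (1, 0) ^ 3
      + C (1 / 18) * X (0, 1) ^ 3 + C (1 / 18) * X (1, 0) * X (0, 1) * X (1, 1) ^ 2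
      + C (1 / 9720) * X (1, 1) ^ 6 := by
  simp +decide only [F33, map_add, pderiv_mul, pderiv_pow, pderiv_C, pderiv_X, Pi.single_apply,
    if_true, if_false]
  polynomial

lemma d3_F33_00 (a b : Vidx) : d3 F33 (0, 0) a b = C (eta a b) := by
  rw [d3_rotate, d3, pderiv_F33_00]
  obtain ⟨⟨i, j⟩, ⟨k, l⟩⟩ := a, b
  fin_cases i <;> fin_cases j <;> fin_cases k <;> fin_cases l <;>
    simp [eta, pderiv_X]

lemma d3Matrix_F33_10 :
    d3Matrix F33 (1, 0) = ofTable
      !![0, 1, 0, 0;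
         1, 0, 0, C (1 / 18) * X (1, 1) ^ 2;
         0, 0, C (1 / 3) * X (1, 1), C (1 / 3) * X (1, 0);
         0, C (1 / 18) * X (1, 1) ^ 2, C (1 / 3) * X (1, 0), C (1 / 9) * X (0, 1) * X (1, 1)] := by
  refine eq_ofTable_iff.mpr fun i j => ?_
  rw [d3Matrix, Matrix.of_apply, d3_rotate, d3, pderiv_F33_10]
  fin_cases i <;> fin_cases j <;>
    simp +decide only [Fin.zero_eta, Fin.mk_one, Fin.reduceFinMk, tableIndex, Equiv.coe_fn_mk,
      Matrix.of_apply, Matrix.cons_val, map_add, map_zero, pderiv_one, pderiv_mul, pderiv_pow,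
      pderiv_C, pderiv_X, Pi.single_apply, Derivation.map_natCast, if_true, if_false] <;>
    polynomial

lemma d3Matrix_F33_01 :
    d3Matrix F33 (0, 1) = ofTable
      !![0, 0, 1, 0;
         0, C (1 / 3) * X (1, 1), 0, C (1 / 3) * X (0, 1);
         1, 0, 0, C (1 / 18) * X (1, 1) ^ 2;
         0, C (1 / 3) * X (0, 1), C (1 / 18) * X (1, 1) ^ 2, C (1 / 9) * X (1, 0) * X (1, 1)] := by
  refine eq_ofTable_iff.mpr fun i j => ?_
  rw [d3Matrix, Matrix.of_apply, d3_rotate, d3, pderiv_F33_01]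
  fin_cases i <;> fin_cases j <;>
    simp +decide only [Fin.zero_eta, Fin.mk_one, Fin.reduceFinMk, tableIndex, Equiv.coe_fn_mk,
      Matrix.of_apply, Matrix.cons_val, map_add, map_zero, pderiv_one, pderiv_mul, pderiv_pow,
      pderiv_C, pderiv_X, Pi.single_apply, Derivation.map_natCast, if_true, if_false] <;>
    polynomial

lemma d3Matrix_F33_11 :
    d3Matrix F33 (1, 1) = ofTable
      !![1, 0, 0, 0;
         0, C (1 / 3) * X (0, 1), C (1 / 18) * X (1, 1) ^ 2, C (1 / 9) * X (1, 0) * X (1, 1);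
         0, C (1 / 18) * X (1, 1) ^ 2, C (1 / 3) * X (1, 0), C (1 / 9) * X (0, 1) * X (1, 1);
         0, C (1 / 9) * X (1, 0) * X (1, 1), C (1 / 9) * X (0, 1) * X (1, 1),
          C (1 / 9) * X (1, 0) * X (0, 1) + C (1 / 324) * X (1, 1) ^ 4] := by
  refine eq_ofTable_iff.mpr fun i j => ?_
  rw [d3Matrix, Matrix.of_apply, d3_rotate, d3, pderiv_F33_11]
  fin_cases i <;> fin_cases j <;>
    simp +decide only [Fin.zero_eta, Fin.mk_one, Fin.reduceFinMk, tableIndex, Equiv.coe_fn_mk,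
      Matrix.of_apply, Matrix.cons_val, map_add, map_zero, pderiv_one, pderiv_mul, pderiv_pow,
      pderiv_C, pderiv_X, Pi.single_apply, Derivation.map_natCast, if_true, if_false] <;>
    polynomial

lemma quantumMul_F33_10_mul_01 :
    quantumMul F33 (1, 0) * quantumMul F33 (0, 1) =
      quantumMul F33 (1, 1) + (C (1 / 18) * X (1, 1) ^ 2 : MvPolynomial Vidx ℚ) • 1 := by
  rw [quantumMul, quantumMul, quantumMul, d3Matrix_F33_10, d3Matrix_F33_01, d3Matrix_F33_11,
    etaMatrix_eq_ofTable, ← map_one ofTable]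
  simp only [← map_mul, ← map_smul, ← map_add]
  congr 1
  ext1 i j
  fin_cases i <;> fin_cases j <;>
    simp +decide only [Fin.zero_eta, Fin.mk_one, Fin.reduceFinMk, Matrix.mul_apply,
      Matrix.add_apply, Matrix.smul_apply, Matrix.one_apply, Fin.sum_univ_four, Matrix.of_apply,
      Matrix.cons_val, smul_eq_mul, if_true, if_false] <;>
    polynomial

/-- The weight `3 - a - b` of the variable `t_{ab}`, for which `F33` has degree `7`. The subtraction
does not truncate, since `a, b ≤ 1`. -/
def variableWeight (v : Vidx) : ℕ := 3 - v.1 - v.2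

lemma isWeightedHomogeneous_F33 : IsWeightedHomogeneous variableWeight F33 7 := by
  have hC := isWeightedHomogeneous_C (R := ℚ) variableWeight
  have hX := isWeightedHomogeneous_X ℚ variableWeight
  refine (((((?_ : IsWeightedHomogeneous variableWeight _ 7).add ?_).add ?_).add ?_).add ?_).add ?_
  · exact ((hC _).mul ((hX _).pow 2)).mul (hX _)
  · exact ((hX _).mul (hX _)).mul (hX _)
  · exact ((hC _).mul ((hX _).pow 3)).mul (hX _)
  · exact ((hC _).mul ((hX _).pow 3)).mul (hX _)
  · exact (((hC _).mul (hX _)).mul (hX _)).mul ((hX _).pow 3)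
  · exact (hC _).mul ((hX _).pow 7)

lemma weight_variableWeight (m : Vidx →₀ ℕ) :
    Finsupp.weight variableWeight m = 3 * m (0, 0) + 2 * m (1, 0) + 2 * m (0, 1) + m (1, 1) := by
  rw [Finsupp.weight_apply, Finsupp.sum_fintype]
  · simp only [Fintype.sum_prod_type, Fin.sum_univ_two, variableWeight, smul_eq_mul, Fin.val_zero,
      Fin.val_one]
    omega
  · exact fun _ => zero_smul ℕ _

/-- `F_{3,3}` satisfies the WDVV equations, `∂³F_{3,3}/∂t_{00}∂t_a∂t_b = η_{a,b}`,
and every monomial `t₀₀^a t₁₀^b t₀₁^c t₁₁^d` occurring in `F_{3,3}` satisfies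
`3a + 2b + 2c + d = 7`. -/
theorem F33_wdvv_flat_homogeneous :
    SatisfiesWDVV F33 ∧
    (∀ a b : Vidx, d3 F33 (0,0) a b = MvPolynomial.C (eta a b)) ∧
    (∀ m ∈ F33.support,
      3 * m (0,0) + 2 * m (1,0) + 2 * m (0,1) + m (1,1) = 7) := by
  refine ⟨satisfiesWDVV_of_quantumMul_mul_eq d3_F33_00 quantumMul_F33_10_mul_01, d3_F33_00,
    fun m hm => ?_⟩
  rw [← weight_variableWeight]
  exact isWeightedHomogeneous_F33 (mem_support_iff.mp hm)
end

section
/- For all i, j ∈ V, the polynomial Σ_{k ∈ V} φ_k·ĉ_{i,j}^k − φ_i·φ_j lies in the ideal of ℚ[s_{00}, s_{10}, s_{01}, s_{11}, x₁, x₂] generated by ∂W_s/∂x₁ = 3x₁² + s_{11}x₂ + s_{10} and ∂W_s/∂x₂ = 3x₂² + s_{11}x₁ + s_{01}. That is, under the coordinate change t(s), the Frobenius multiplication defined by the FJRW potential F_{3,3} coincides with the multiplication in the Jacobian algebra of the miniversal deformation W_s of x₁³+x₂³ — the multiplication part of the Landau–Ginzburg mirror isomorphism for D₄. -/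
open scoped BigOperators
open MvPolynomial

/-- Structure constants of the Frobenius multiplication of `F_{3,3}` in the flat coordinates:
`c_{a,b}^e(t) = ∑_f η_{e,f}·∂³F_{3,3}/∂t_a∂t_b∂t_f`. -/
noncomputable def cStruct (a b e : Vidx) : MvPolynomial Vidx ℚ :=
  ∑ f : Vidx, MvPolynomial.C (eta e f) * pderiv a (pderiv b (pderiv f F33))

/-- The coordinate change `t(s)`: `t₀₀ = s₀₀ + s₁₁³/54`, `t₁₀ = −s₁₀`, `t₀₁ = −s₀₁`,
`t₁₁ = s₁₁` (here `X v` is `s_v`). -/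
noncomputable def tOfS : Vidx → MvPolynomial Vidx ℚ := fun v =>
  if v = ((0,0) : Vidx) then X (0,0) + MvPolynomial.C (1/54 : ℚ) * X (1,1) ^ 3
  else if v = ((1,0) : Vidx) then -X (1,0)
  else if v = ((0,1) : Vidx) then -X (0,1)
  else X (1,1)

/-- The inverse coordinate change `s(t)`: `s₀₀ = t₀₀ − t₁₁³/54`, `s₁₀ = −t₁₀`, `s₀₁ = −t₀₁`,
`s₁₁ = t₁₁` (here `X v` is `t_v`). -/
noncomputable def sOfT : Vidx → MvPolynomial Vidx ℚ := fun v =>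
  if v = ((0,0) : Vidx) then X (0,0) - MvPolynomial.C (1/54 : ℚ) * X (1,1) ^ 3
  else if v = ((1,0) : Vidx) then -X (1,0)
  else if v = ((0,1) : Vidx) then -X (0,1)
  else X (1,1)

/-- The structure constants in the coordinates `s`:
`ĉ_{i,j}^k(s) = ∑_{a,b,e} (∂t_a/∂s_i)·(∂t_b/∂s_j)·(∂s_k/∂t_e)∘t(s)·c_{a,b}^e∘t(s)`. -/
noncomputable def cHat (i j k : Vidx) : MvPolynomial Vidx ℚ :=
  ∑ a : Vidx, ∑ b : Vidx, ∑ e : Vidx,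
    pderiv i (tOfS a) * pderiv j (tOfS b) *
      MvPolynomial.aeval tOfS (pderiv e (sOfT k)) *
        MvPolynomial.aeval tOfS (cStruct a b e)

/-- The basis `φ_{(0,0)} = 1`, `φ_{(1,0)} = x₁`, `φ_{(0,1)} = x₂`, `φ_{(1,1)} = x₁x₂` of the
Jacobian algebra, inside `ℚ[s₀₀,s₁₀,s₀₁,s₁₁,x₁,x₂]` (with `x₁ = X (Sum.inr 0)` and
`x₂ = X (Sum.inr 1)`). -/
noncomputable def phiB : Vidx → MvPolynomial (Vidx ⊕ Fin 2) ℚ := fun v =>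
  if v = ((0,0) : Vidx) then 1
  else if v = ((1,0) : Vidx) then X (Sum.inr 0)
  else if v = ((0,1) : Vidx) then X (Sum.inr 1)
  else X (Sum.inr 0) * X (Sum.inr 1)

/-! In flat coordinates `t` the potential multiplies the frame by
`∂_a ∘ ∂_b = ∑_f (∂_f ∂_a ∂_b F) ∂_{1-f}`, so each product is read off from the gradient of one
Hessian entry. In the Jacobian algebra `∂_a` becomes `∂W/∂t_a`, i.e. `1`, `-x₁`, `-x₂` and
`x₁x₂ - t₁₁²/18`; as `3x₁² = t₁₀ - t₁₁x₂` and `3x₂² = t₀₁ - t₁₁x₁` there, these classes multiply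
as the potential prescribes. The chain rule carries this table to the coordinates `s`. -/

section ChainRule

lemma derivation_ofNat {R A M : Type*} [CommSemiring R] [CommSemiring A] [Algebra R A]
    [AddCommMonoid M] [Module A M] [Module R M] (D : Derivation R A M) (n : ℕ)
    [n.AtLeastTwo] : D ofNat(n) = 0 :=
  D.map_natCast n

lemma derivation_aeval {R A M σ : Type*} [CommSemiring R] [CommSemiring A] [Algebra R A]
    [AddCommMonoid M] [Module A M] [Module R M] [IsScalarTower R A M] [Fintype σ]
    (D : Derivation R A M) (f : σ → A) (p : MvPolynomial σ R) :
    D (aeval f p) = ∑ a, aeval f (pderiv a p) • D (f a) := by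
  classical
  induction p using MvPolynomial.induction_on with
  | C r => simp
  | add p q hp hq => simp [hp, hq, add_smul, Finset.sum_add_distrib]
  | mul_X p n hp =>
    simp [hp, pderiv_X, Pi.single_apply, add_smul, mul_smul, Finset.sum_add_distrib,
      Finset.smul_sum, apply_ite]

variable {R σ τ : Type*} [CommSemiring R]

lemma pderiv_pderiv_comm (i j : σ) (p : MvPolynomial σ R) :
    pderiv i (pderiv j p) = pderiv j (pderiv i p) := by
  classical
  induction p using MvPolynomial.induction_on with
  | C r => simp
  | add p q hp hq => simp [hp, hq]
  | mul_X p n hp =>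
    have hX (k l : σ) : pderiv k (pderiv l (X n : MvPolynomial σ R)) = 0 := by
      simp [pderiv_X, Pi.single_apply, apply_ite]
    simp only [Derivation.leibniz, smul_eq_mul, map_add, hX, hp]
    ring

/-- The Jacobian matrix of a polynomial map `f`, transposed so that the row index is the variable
of differentiation, as in the covariant slots of a tensor. -/
noncomputable def jacobian (f : σ → MvPolynomial τ R) : Matrix τ σ (MvPolynomial τ R) :=
  Matrix.of fun i a ↦ pderiv i (f a)

lemma jacobian_mul_map_jacobian_eq_one [Fintype σ] [DecidableEq τ] {t : σ → MvPolynomial τ R}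
    {s : τ → MvPolynomial σ R} (hts : ∀ k, aeval t (s k) = X k) :
    jacobian t * (jacobian s).map (aeval t) = 1 := by
  ext1 i k
  calc (jacobian t * (jacobian s).map (aeval t)) i k
      = pderiv i (aeval t (s k)) := by
        simp only [jacobian, Matrix.mul_apply, Matrix.map_apply, Matrix.of_apply, derivation_aeval,
          smul_eq_mul, mul_comm]
    _ = (1 : Matrix τ τ (MvPolynomial τ R)) i k := by
        rw [hts, pderiv_X, Pi.single_apply, Matrix.one_apply]; simp [eq_comm]

end ChainRule

section MultiplicationTable

/-- The family `φ` multiplies with structure constants `c`. The `φ k` need not be linearly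
independent, so `c` is in general not determined by `φ`. -/
def IsMultiplicationTable {ι B : Type*} [Fintype ι] [NonUnitalNonAssocSemiring B]
    (c : ι → ι → ι → B) (φ : ι → B) : Prop :=
  ∀ i j, φ i * φ j = ∑ k, c i j k * φ k

variable {R B σ τ : Type*} [Fintype σ] [Fintype τ] [CommSemiring R] [CommSemiring B] [Algebra R B]

lemma IsMultiplicationTable.changeBasis [DecidableEq τ] {c : σ → σ → σ → B} {φ : τ → B}
    {P : Matrix τ σ B} {Q : Matrix σ τ B} (h : IsMultiplicationTable c (Q.mulVec φ))
    (hPQ : P * Q = 1) :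
    IsMultiplicationTable (fun i j k ↦ ∑ a, ∑ b, ∑ e, P i a * P j b * Q e k * c a b e) φ := by
  intro i j
  have hφ (l : τ) : φ l = ∑ a, P l a * Q.mulVec φ a := by
    change φ l = P.mulVec (Q.mulVec φ) l
    rw [Matrix.mulVec_mulVec, hPQ, Matrix.one_mulVec]
  have hterm (a b : σ) : P i a * P j b * (Q.mulVec φ a * Q.mulVec φ b) =
      ∑ e, ∑ k, P i a * P j b * Q e k * c a b e * φ k := by
    rw [h a b, Finset.mul_sum]
    refine Finset.sum_congr rfl fun e _ ↦ ?_
    simp only [Matrix.mulVec, dotProduct, Finset.mul_sum]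
    exact Finset.sum_congr rfl fun k _ ↦ by ring
  calc φ i * φ j = ∑ a, ∑ b, ∑ e, ∑ k, P i a * P j b * Q e k * c a b e * φ k := by
        rw [hφ i, hφ j]
        simp only [Finset.sum_mul_sum, mul_mul_mul_comm, hterm]
    _ = ∑ k, ∑ a, ∑ b, ∑ e, P i a * P j b * Q e k * c a b e * φ k :=
        (Finset.sum_comm.trans <| Finset.sum_congr rfl fun a _ ↦
          Finset.sum_comm.trans <| Finset.sum_congr rfl fun b _ ↦ Finset.sum_comm).symm
    _ = ∑ k, (∑ a, ∑ b, ∑ e, P i a * P j b * Q e k * c a b e) * φ k := by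
        simp only [Finset.sum_mul]

lemma IsMultiplicationTable.changeCoordinates {t : σ → MvPolynomial τ R}
    {s : τ → MvPolynomial σ R} (hts : ∀ k, aeval t (s k) = X k)
    {c : σ → σ → σ → MvPolynomial σ R} {φ : τ → B} (ev : MvPolynomial τ R →ₐ[R] B)
    (h : IsMultiplicationTable (fun a b e ↦ ev (aeval t (c a b e)))
      (fun e ↦ ∑ k, ev (aeval t (pderiv e (s k))) * φ k)) :
    IsMultiplicationTable (fun i j k ↦ ev (∑ a, ∑ b, ∑ e,
      pderiv i (t a) * pderiv j (t b) * aeval t (pderiv e (s k)) * aeval t (c a b e))) φ := by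
  classical
  have hPQ : (jacobian t).map ev * ((jacobian s).map (aeval t)).map ev = 1 := by
    rw [← Matrix.map_mul, jacobian_mul_map_jacobian_eq_one hts,
      Matrix.map_one _ (map_zero ev) (map_one ev)]
  simpa [jacobian] using IsMultiplicationTable.changeBasis (P := (jacobian t).map ev)
    (Q := ((jacobian s).map (aeval t)).map ev) h hPQ

end MultiplicationTable

section FlatCoordinates

/-- The second derivatives `∂_a ∂_b F₃₃` in closed form. -/
noncomputable def hessianF33 : Vidx → Vidx → MvPolynomial Vidx ℚ
  | (0, 0), (0, 0) => X (1, 1)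
  | (0, 0), (1, 0) | (1, 0), (0, 0) => X (0, 1)
  | (0, 0), (0, 1) | (0, 1), (0, 0) => X (1, 0)
  | (0, 0), (1, 1) | (1, 1), (0, 0) => X (0, 0)
  | (1, 0), (1, 0) => C (1/3) * X (1, 0) * X (1, 1)
  | (0, 1), (0, 1) => C (1/3) * X (0, 1) * X (1, 1)
  | (1, 0), (0, 1) | (0, 1), (1, 0) => X (0, 0) + C (1/54) * X (1, 1) ^ 3
  | (1, 0), (1, 1) | (1, 1), (1, 0) => C (1/6) * X (1, 0) ^ 2 + C (1/18) * X (0, 1) * X (1, 1) ^ 2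
  | (0, 1), (1, 1) | (1, 1), (0, 1) => C (1/6) * X (0, 1) ^ 2 + C (1/18) * X (1, 0) * X (1, 1) ^ 2
  | (1, 1), (1, 1) => C (1/9) * X (1, 0) * X (0, 1) * X (1, 1) + C (1/1620) * X (1, 1) ^ 5

lemma pderiv_pderiv_F33 (a b : Vidx) : pderiv a (pderiv b F33) = hessianF33 a b := by
  fin_cases a <;> fin_cases b <;>
  · simp +decide only [F33, hessianF33, map_add, map_zero, Derivation.leibniz,
      Derivation.leibniz_pow, derivation_C, derivation_ofNat, pderiv_one, pderiv_X,
      Pi.single_apply, reduceIte, smul_eq_mul, nsmul_eq_mul, Nat.cast_ofNat]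
    polynomial

lemma cStruct_eq_pderiv_hessianF33 (a b e : Vidx) :
    cStruct a b e = pderiv (1 - e) (hessianF33 a b) := by
  have heta (f : Vidx) : eta e f = if f = 1 - e then 1 else 0 := by
    revert e f; decide
  calc cStruct a b e = pderiv a (pderiv b (pderiv (1 - e) F33)) := by simp [cStruct, heta]
    _ = pderiv (1 - e) (pderiv a (pderiv b F33)) := by
      rw [pderiv_pderiv_comm b, pderiv_pderiv_comm a]
    _ = pderiv (1 - e) (hessianF33 a b) := by rw [pderiv_pderiv_F33]

variable {B : Type*} [CommRing B] [Algebra ℚ B]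

lemma sum_aeval_cStruct_mul (T ψ : Vidx → B) (a b : Vidx) :
    ∑ e, aeval T (cStruct a b e) * ψ e =
      aeval T (pderiv (1, 1) (hessianF33 a b)) * ψ (0, 0) +
      aeval T (pderiv (1, 0) (hessianF33 a b)) * ψ (0, 1) +
      aeval T (pderiv (0, 1) (hessianF33 a b)) * ψ (1, 0) +
      aeval T (pderiv (0, 0) (hessianF33 a b)) * ψ (1, 1) := by
  have hdual (v w : Fin 2) : (1 : Vidx) - (v, w) = (1 - v, 1 - w) := rfl
  simp [cStruct_eq_pderiv_hessianF33, Fintype.sum_prod_type, hdual, add_assoc]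

/-- The flat frame of the Jacobian algebra: entry `a` is the class of `∂W/∂t_a`, at a point
with coordinate `t₁₁ = d`. -/
noncomputable def flatFrame (d x y : B) : Vidx → B
  | (0, 0) => 1
  | (1, 0) => -x
  | (0, 1) => -y
  | (1, 1) => x * y - algebraMap ℚ B (1/18) * d ^ 2

theorem isMultiplicationTable_aeval_cStruct (T : Vidx → B) {x y : B}
    (hx : 3 * x ^ 2 + T (1, 1) * y = T (1, 0)) (hy : 3 * y ^ 2 + T (1, 1) * x = T (0, 1)) :
    IsMultiplicationTable (fun a b e ↦ aeval T (cStruct a b e)) (flatFrame (T (1, 1)) x y) := by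
  have hx2 : x ^ 2 = algebraMap ℚ B (1/3) * (T (1, 0) - T (1, 1) * y) := by
    linear_combination (norm := algebra) algebraMap ℚ B (1/3) * hx
  have hy2 : y ^ 2 = algebraMap ℚ B (1/3) * (T (0, 1) - T (1, 1) * x) := by
    linear_combination (norm := algebra) algebraMap ℚ B (1/3) * hy
  have hx2y : x ^ 2 * y = algebraMap ℚ B (1/3) * T (1, 0) * y -
      algebraMap ℚ B (1/9) * T (1, 1) * (T (0, 1) - T (1, 1) * x) := by
    linear_combination (norm := algebra) y * hx2 - algebraMap ℚ B (1/3) * T (1, 1) * hy2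
  have hxy2 : x * y ^ 2 = algebraMap ℚ B (1/3) * T (0, 1) * x -
      algebraMap ℚ B (1/9) * T (1, 1) * (T (1, 0) - T (1, 1) * y) := by
    linear_combination (norm := algebra) x * hy2 - algebraMap ℚ B (1/3) * T (1, 1) * hx2
  have hx2y2 : x ^ 2 * y ^ 2 =
      algebraMap ℚ B (1/9) * (T (1, 0) - T (1, 1) * y) * (T (0, 1) - T (1, 1) * x) := by
    rw [hx2, hy2]
    algebra
  intro a b
  simp only [sum_aeval_cStruct_mul]
  fin_cases a <;> fin_cases b <;>
    simp +decide only [hessianF33, flatFrame, map_add, map_mul, map_pow, map_zero, map_one,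
      Derivation.leibniz, Derivation.leibniz_pow, derivation_C, pderiv_X, Pi.single_apply,
      reduceIte, smul_eq_mul, nsmul_eq_mul, Nat.cast_ofNat, aeval_X, aeval_C, map_ofNat]
  any_goals algebra
  · linear_combination (norm := algebra) hy2
  · linear_combination (norm := algebra) -hxy2
  · linear_combination (norm := algebra) hx2
  · linear_combination (norm := algebra) -hx2y
  · linear_combination (norm := algebra) -hxy2
  · linear_combination (norm := algebra) -hx2y
  · linear_combination (norm := algebra) hx2y2

end FlatCoordinates

section MiniversalCoordinates

lemma aeval_tOfS_sOfT (k : Vidx) : aeval tOfS (sOfT k) = X k := by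
  fin_cases k <;> simp [tOfS, sOfT]

variable {B : Type*} [CommRing B] [Algebra ℚ B]

/-- The family `1, x, y, xy`, indexed by exponents. -/
def exponentBasis (x y : B) (v : Vidx) : B := x ^ v.1.val * y ^ v.2.val

lemma phiB_eq_exponentBasis (v : Vidx) :
    phiB v = exponentBasis (X (Sum.inr 0)) (X (Sum.inr 1)) v := by
  fin_cases v <;> simp [phiB, exponentBasis]

lemma flatFrame_eq_sum (ev : MvPolynomial Vidx ℚ →ₐ[ℚ] B) (x y : B) :
    flatFrame (ev (X (1, 1))) x y =
      fun e ↦ ∑ k, ev (aeval tOfS (pderiv e (sOfT k))) * exponentBasis x y k := by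
  ext e
  fin_cases e <;>
  · simp +decide only [flatFrame, sOfT, tOfS, exponentBasis, Fintype.sum_prod_type,
      Fin.sum_univ_two, Fin.val_zero, Fin.val_one, pow_zero, pow_one, map_add, map_sub, map_neg,
      map_mul, map_pow, map_zero, map_one, Derivation.leibniz, Derivation.leibniz_pow,
      derivation_C, pderiv_X, Pi.single_apply, reduceIte, smul_eq_mul, nsmul_eq_mul,
      Nat.cast_ofNat, aeval_X, aeval_C, AlgHom.commutes, map_ofNat]
    algebra

theorem isMultiplicationTable_cHat (ev : MvPolynomial Vidx ℚ →ₐ[ℚ] B) {x y : B}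
    (hx : 3 * x ^ 2 + ev (X (1, 1)) * y + ev (X (1, 0)) = 0)
    (hy : 3 * y ^ 2 + ev (X (1, 1)) * x + ev (X (0, 1)) = 0) :
    IsMultiplicationTable (fun i j k ↦ ev (cHat i j k)) (exponentBasis x y) := by
  have hT10 : tOfS (1, 0) = -X (1, 0) := by simp [tOfS]
  have hT01 : tOfS (0, 1) = -X (0, 1) := by simp [tOfS]
  have hT11 : tOfS (1, 1) = X (1, 1) := by simp [tOfS]
  refine IsMultiplicationTable.changeCoordinates aeval_tOfS_sOfT ev ?_
  rw [← flatFrame_eq_sum, ← hT11]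
  simp only [comp_aeval_apply]
  refine isMultiplicationTable_aeval_cStruct (fun v ↦ ev (tOfS v)) ?_ ?_
  · simp only [hT11, hT10, map_neg]
    linear_combination hx
  · simp only [hT11, hT01, map_neg]
    linear_combination hy

lemma sum_phiB_mul_rename_cHat_sub_mem {I : Ideal (MvPolynomial (Vidx ⊕ Fin 2) ℚ)}
    (hx : C (3 : ℚ) * X (Sum.inr 0) ^ 2 + X (Sum.inl (1, 1)) * X (Sum.inr 1) +
      X (Sum.inl (1, 0)) ∈ I)
    (hy : C (3 : ℚ) * X (Sum.inr 1) ^ 2 + X (Sum.inl (1, 1)) * X (Sum.inr 0) +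
      X (Sum.inl (0, 1)) ∈ I) (i j : Vidx) :
    (∑ k, phiB k * rename Sum.inl (cHat i j k)) - phiB i * phiB j ∈ I := by
  let ev := (Ideal.Quotient.mkₐ ℚ I).comp (rename Sum.inl)
  have hC : Ideal.Quotient.mk I (C 3) = 3 := map_ofNat ((Ideal.Quotient.mk I).comp C) 3
  have hφ (v : Vidx) : Ideal.Quotient.mk I (phiB v) = exponentBasis
      (Ideal.Quotient.mk I (X (Sum.inr 0))) (Ideal.Quotient.mk I (X (Sum.inr 1))) v := by
    simp only [phiB_eq_exponentBasis, exponentBasis, map_mul, map_pow]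
  have hinl (v : Vidx) : ev (X v) = Ideal.Quotient.mk I (X (Sum.inl v)) := by simp [ev]
  simp only [← Ideal.Quotient.eq_zero_iff_mem, map_add, map_mul, map_pow, hC, ← hinl] at hx hy
  have htable := isMultiplicationTable_cHat ev hx hy i j
  rw [← hφ, ← hφ] at htable
  rw [← Ideal.Quotient.eq, map_mul, htable, map_sum]
  refine Finset.sum_congr rfl fun k _ ↦ ?_
  rw [map_mul, hφ, mul_comm]
  rfl

end MiniversalCoordinates

/-- under the coordinate change `t(s)`, the Frobenius multiplication of `F_{3,3}`
coincides with the multiplication in the Jacobian algebra of the miniversal deformation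
`W_s = x₁³ + x₂³ + s₁₁x₁x₂ + s₀₁x₂ + s₁₀x₁ + s₀₀`: for all `i, j ∈ V`,
`∑_k φ_k·ĉ_{i,j}^k − φ_i·φ_j` lies in the ideal generated by
`∂W_s/∂x₁ = 3x₁² + s₁₁x₂ + s₁₀` and `∂W_s/∂x₂ = 3x₂² + s₁₁x₁ + s₀₁`. -/
theorem multiplication_mirror_symmetry_D4 :
    ∀ i j : Vidx,
      (∑ k : Vidx, phiB k * MvPolynomial.rename Sum.inl (cHat i j k)) - phiB i * phiB j ∈
        Ideal.span
          ({MvPolynomial.C (3 : ℚ) * X (Sum.inr 0) ^ 2 +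
              X (Sum.inl (1,1)) * X (Sum.inr 1) + X (Sum.inl (1,0)),
            MvPolynomial.C (3 : ℚ) * X (Sum.inr 1) ^ 2 +
              X (Sum.inl (1,1)) * X (Sum.inr 0) + X (Sum.inl (0,1))} :
            Set (MvPolynomial (Vidx ⊕ Fin 2) ℚ)) := by
  exact sum_phiB_mul_rename_cHat_sub_mem (Ideal.subset_span (by simp)) (Ideal.subset_span (by simp))
end
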